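/- arXiv:1007.1474 — 8 statements merged into one kernel-verified Lean document; each statement's English description precedes it below -/
import Mathlib

section
/- For all real numbers τ_L > 0 and τ_R > 0 there exists a unique d ∈ (0,1) such that τ_L^d + τ_R^d = (1 + τ_L + τ_R)^d. -/
/-!
Divide by `(1 + τL + τR) ^ d`: with `a = τL / (1 + τL + τR)` and `b = τR / (1 + τL + τR)`, both in
`(0, 1)`, the equation becomes `a ^ d + b ^ d = 1`. The left side is continuous and strictly
decreasing in `d`, equals `2` at `d = 0` and `a + b < 1` at `d = 1`, so the intermediate value
theorem gives existence and strict monotonicity gives uniqueness.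
-/

/-- For all real numbers `τL > 0` and `τR > 0` there exists a unique `d ∈ (0,1)`
such that `τL ^ d + τR ^ d = (1 + τL + τR) ^ d` (real powers). -/
theorem unique_dimension_exponent (τL τR : ℝ) (hL : 0 < τL) (hR : 0 < τR) :
    ∃! d : ℝ, d ∈ Set.Ioo (0 : ℝ) 1 ∧
      τL ^ d + τR ^ d = (1 + τL + τR) ^ d := by
  have hS : 0 < 1 + τL + τR := by positivity
  set S := 1 + τL + τR with hSdef
  have ha : 0 < τL / S := by positivity
  have hb : 0 < τR / S := by positivity
  have ha1 : τL / S < 1 := by rw [div_lt_one hS]; linarith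
  have hb1 : τR / S < 1 := by rw [div_lt_one hS]; linarith
  have key : ∀ d : ℝ, τL ^ d + τR ^ d = S ^ d ↔ (τL / S) ^ d + (τR / S) ^ d = 1 := by
    intro d
    rw [Real.div_rpow hL.le hS.le, Real.div_rpow hR.le hS.le, ← add_div,
      div_eq_one_iff_eq (Real.rpow_pos_of_pos hS d).ne']
  have hanti : StrictAnti fun d : ℝ => (τL / S) ^ d + (τR / S) ^ d := fun x y h =>
    add_lt_add (Real.rpow_lt_rpow_of_exponent_gt ha ha1 h)
      (Real.rpow_lt_rpow_of_exponent_gt hb hb1 h)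
  have hcont : Continuous fun d : ℝ => (τL / S) ^ d + (τR / S) ^ d :=
    (Real.continuous_const_rpow ha.ne').add (Real.continuous_const_rpow hb.ne')
  have hmem : (1 : ℝ) ∈ Set.Ioo ((fun d : ℝ => (τL / S) ^ d + (τR / S) ^ d) 1)
      ((fun d : ℝ => (τL / S) ^ d + (τR / S) ^ d) 0) := by
    constructor
    · simp only [Real.rpow_one]
      rw [← add_div, div_lt_one hS]
      linarith
    · norm_num
  obtain ⟨d, hd, hd1⟩ := intermediate_value_Ioo' zero_le_one hcont.continuousOn hmem
  refine ⟨d, ⟨hd, (key d).2 hd1⟩, ?_⟩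
  rintro e ⟨-, he⟩
  exact hanti.injective (((key e).1 he).trans hd1.symm)
end

section
/- Let τ_L, τ_R > 0 and let d ∈ (0,1) satisfy τ_L^d + τ_R^d = (1 + τ_L + τ_R)^d. Then min { x^d + y^d : x ≥ 0, y ≥ 0, x + y ≤ 1, x ≥ τ_L(1 − x − y), y ≥ τ_R(1 − x − y) } = 1; that is, every (x,y) in this constraint set satisfies x^d + y^d ≥ 1, and the value 1 is attained on the set (for example at x = τ_L/(1+τ_L+τ_R), y = τ_R/(1+τ_L+τ_R)). -/
/-!
The constraint set is the triangle with vertices `(1, 0)`, `(0, 1)` and `(a, b)`, where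
`a = τL / (1 + τL + τR)` and `b = τR / (1 + τL + τR)`. The map `(x, y) ↦ x ^ d + y ^ d` is
concave on the quadrant, and it equals `1` at each vertex (at the third one this is the equation
satisfied by `d`), so it is at least `1` on the triangle. With `w = 1 - x - y`, the barycentric
coordinates of `(x, y)` are `x - τL * w`, `y - τR * w` and `(1 + τL + τR) * w`.
-/

/-- Concavity of `t ↦ t ^ d` at the convex combination of the points `1`, `0` and `a` with
weights `u`, `v` and `w`. -/
lemma add_mul_rpow_le_rpow {d u v w a : ℝ} (hd0 : 0 < d) (hd1 : d ≤ 1) (hu : 0 ≤ u)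
    (hv : 0 ≤ v) (hw : 0 ≤ w) (hsum : u + v + w = 1) (ha : 0 ≤ a) :
    u + w * a ^ d ≤ (u + w * a) ^ d := by
  have h := (Real.concaveOn_rpow hd0.le hd1).le_map_sum (t := Finset.univ)
    (w := ![u, v, w]) (p := ![1, 0, a])
    (by intro i _; fin_cases i <;> simpa)
    (by simpa [Fin.sum_univ_three] using hsum)
    (by intro i _; fin_cases i <;> simp [ha])
  simpa [Fin.sum_univ_three, Real.zero_rpow hd0.ne'] using h

/-- Let `τL, τR > 0` and `d ∈ (0,1)` satisfy `τL ^ d + τR ^ d = (1 + τL + τR) ^ d`.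
Then the minimum of `x ^ d + y ^ d` over the set
`{(x,y) : x ≥ 0, y ≥ 0, x + y ≤ 1, x ≥ τL(1 - x - y), y ≥ τR(1 - x - y)}` equals `1`:
every point of the set satisfies `x ^ d + y ^ d ≥ 1`, and the value `1` is attained,
for example at `x = τL/(1+τL+τR)`, `y = τR/(1+τL+τR)`. -/
theorem min_of_power_sum_on_constraint_set (τL τR d : ℝ) (hL : 0 < τL) (hR : 0 < τR)
    (hd : d ∈ Set.Ioo (0 : ℝ) 1)
    (heq : τL ^ d + τR ^ d = (1 + τL + τR) ^ d) :
    IsLeast {z : ℝ | ∃ x y : ℝ, 0 ≤ x ∧ 0 ≤ y ∧ x + y ≤ 1 ∧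
        τL * (1 - x - y) ≤ x ∧ τR * (1 - x - y) ≤ y ∧ z = x ^ d + y ^ d} 1 ∧
    (τL / (1 + τL + τR)) ^ d + (τR / (1 + τL + τR)) ^ d = 1 := by
  obtain ⟨hd0, hd1⟩ := hd
  have hS : 0 < 1 + τL + τR := by positivity
  have hvertex : (τL / (1 + τL + τR)) ^ d + (τR / (1 + τL + τR)) ^ d = 1 := by
    rw [Real.div_rpow hL.le hS.le, Real.div_rpow hR.le hS.le, ← add_div, heq]
    exact div_self (Real.rpow_pos_of_pos hS d).ne'
  refine ⟨⟨⟨τL / (1 + τL + τR), τR / (1 + τL + τR), by positivity, by positivity,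
    ?_, ?_, ?_, hvertex.symm⟩, ?_⟩, hvertex⟩
  · rw [← add_div, div_le_one hS]
    linarith
  · apply le_of_eq
    field_simp
    ring
  · apply le_of_eq
    field_simp
    ring
  · rintro z ⟨x, y, -, -, hxy, hx, hy, rfl⟩
    have hw : 0 ≤ (1 + τL + τR) * (1 - x - y) := mul_nonneg hS.le (by linarith)
    have h1 := add_mul_rpow_le_rpow hd0 hd1.le (sub_nonneg.2 hx) (sub_nonneg.2 hy) hw
      (by ring) (div_nonneg hL.le hS.le)
    have h2 := add_mul_rpow_le_rpow hd0 hd1.le (sub_nonneg.2 hy) (sub_nonneg.2 hx) hw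
      (by ring) (div_nonneg hR.le hS.le)
    have e1 : x - τL * (1 - x - y) + (1 + τL + τR) * (1 - x - y) * (τL / (1 + τL + τR)) = x := by
      field_simp
      ring
    have e2 : y - τR * (1 - x - y) + (1 + τL + τR) * (1 - x - y) * (τR / (1 + τL + τR)) = y := by
      field_simp
      ring
    rw [e1] at h1
    rw [e2] at h2
    linear_combination h1 + h2 - (1 + τL + τR) * (1 - x - y) * hvertex
end

section
/- Let x, y > 0 with x + y < 1, and let d₁, d₂ ∈ (0,1). If y = (1 − x)^{1/d₁} and x^{d₂} + y^{d₂} = 1, then d₂ > d₁. -/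
/-- Let `x, y > 0` with `x + y < 1`, and let `d₁, d₂ ∈ (0,1)`.
If `y = (1 - x) ^ (1/d₁)` and `x ^ d₂ + y ^ d₂ = 1`, then `d₂ > d₁`
(real powers). -/
theorem exponent_comparison (x y d₁ d₂ : ℝ) (hx : 0 < x) (hy : 0 < y)
    (hxy : x + y < 1) (hd₁ : d₁ ∈ Set.Ioo (0 : ℝ) 1) (hd₂ : d₂ ∈ Set.Ioo (0 : ℝ) 1)
    (h₁ : y = (1 - x) ^ (1 / d₁)) (h₂ : x ^ d₂ + y ^ d₂ = 1) :
    d₂ > d₁ := by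
  have hy₁ : y ^ d₁ = 1 - x := by
    rw [h₁, ← Real.rpow_mul (by linarith), one_div_mul_cancel hd₁.1.ne', Real.rpow_one]
  have hx₂ : x < x ^ d₂ := by
    simpa using Real.rpow_lt_rpow_of_exponent_gt hx (by linarith) hd₂.2
  -- `y ^ d₂ = 1 - x ^ d₂ < 1 - x = y ^ d₁`, and `t ↦ y ^ t` is strictly decreasing as `y < 1`.
  exact (Real.rpow_lt_rpow_left_iff_of_base_lt_one hy (by linarith)).mp (by linarith)
end

section
/- Let τ_L, τ_R > 0 and let d ∈ (0,1) satisfy τ_L^d + τ_R^d = (1 + τ_L + τ_R)^d. Then d > log(1 + τ_L/(1+τ_R)) / log(1 + (1+τ_L)/τ_R) and d > log(1 + τ_R/(1+τ_L)) / log(1 + (1+τ_R)/τ_L). -/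
open Real

/-!
Write `S = 1 + a + b`, so that the equation reads `(a/S)^d + (b/S)^d = 1`. Since `0 < a/S < 1`
and `d < 1`, `(a/S)^d > a/S`, hence `(b/S)^d < 1 - a/S = (1+b)/S`. Taking logarithms gives
`d * log (S/b) > log (S/(1+b))`, which is the first bound (`log_bound`). The second bound follows
by exchanging `a` and `b`.
-/

lemma log_bound (a b d : ℝ) (ha : 0 < a) (hb : 0 < b) (hd1 : d < 1)
    (heq : a ^ d + b ^ d = (1 + a + b) ^ d) :
    Real.log (1 + a / (1 + b)) / Real.log (1 + (1 + a) / b) < d := by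
  have hS : 0 < 1 + a + b := by positivity
  have hsum : (a / (1 + a + b)) ^ d + (b / (1 + a + b)) ^ d = 1 := by
    rw [div_rpow ha.le hS.le, div_rpow hb.le hS.le, ← add_div, heq]
    exact div_self (rpow_pos_of_pos hS d).ne'
  have ha1 : a / (1 + a + b) < (a / (1 + a + b)) ^ d := by
    have h := rpow_lt_rpow_of_exponent_gt (x := a / (1 + a + b)) (by positivity)
      (by rw [div_lt_one hS]; linarith) hd1
    rwa [rpow_one] at h
  have hb1 : (b / (1 + a + b)) ^ d < (1 + b) / (1 + a + b) := by
    have h : (1 + b) / (1 + a + b) = 1 - a / (1 + a + b) := by field_simp; ring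
    linarith
  have hlog := Real.log_lt_log (rpow_pos_of_pos (div_pos hb hS) d) hb1
  rw [Real.log_rpow (div_pos hb hS)] at hlog
  have e1 : 1 + a / (1 + b) = ((1 + b) / (1 + a + b))⁻¹ := by field_simp; ring
  have e2 : 1 + (1 + a) / b = (b / (1 + a + b))⁻¹ := by field_simp; ring
  have hpos : 0 < Real.log (1 + (1 + a) / b) :=
    Real.log_pos (by have : 0 < (1 + a) / b := by positivity
                     linarith)
  rw [div_lt_iff₀ hpos, e1, e2, Real.log_inv, Real.log_inv]
  linarith

/-- Let `τL, τR > 0` and `d ∈ (0,1)` satisfy `τL ^ d + τR ^ d = (1 + τL + τR) ^ d`.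
Then `d > log(1 + τL/(1+τR)) / log(1 + (1+τL)/τR)` and
`d > log(1 + τR/(1+τL)) / log(1 + (1+τR)/τL)`
(real powers and natural logarithm). -/
theorem log_lower_bounds_for_exponent (τL τR d : ℝ) (hL : 0 < τL) (hR : 0 < τR)
    (hd : d ∈ Set.Ioo (0 : ℝ) 1)
    (heq : τL ^ d + τR ^ d = (1 + τL + τR) ^ d) :
    d > Real.log (1 + τL / (1 + τR)) / Real.log (1 + (1 + τL) / τR) ∧
    d > Real.log (1 + τR / (1 + τL)) / Real.log (1 + (1 + τR) / τL) := by
  refine ⟨log_bound τL τR d hL hR hd.2 heq, log_bound τR τL d hR hL hd.2 ?_⟩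
  rw [add_comm, heq, add_right_comm]
end

section
/- For every ν > 0, the limit as λ → 1 from the right of log(1 + (1/(λ−1)) / (1 + (λ−1)^ν)) / log(1 + (1 + 1/(λ−1)) / (λ−1)^ν) equals 1/(1+ν). -/
open Real Filter Topology

/-!
Put `x = l - 1 → 0⁺`. The arguments of the two logarithms factor as `x⁻¹ * A` and
`(x * x ^ ν)⁻¹ * B` with `A = x + 1 / (1 + x ^ ν) → 1` and `B = x * x ^ ν + x + 1 → 1`.
Dividing numerator and denominator by `log x → -∞`, the quotient becomes
`(-1 + log A / log x) / (-(1 + ν) + log B / log x)`, and both correction terms vanish.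
-/

/-- A factor tending to `1` is negligible on the scale of `log x` as `x → 0⁺`. -/
lemma tendsto_log_div_log_zero {A : ℝ → ℝ} (hA : Tendsto A (𝓝[>] 0) (𝓝 1)) :
    Tendsto (fun x => Real.log (A x) / Real.log x) (𝓝[>] 0) (𝓝 0) := by
  have h : Tendsto (fun x => Real.log (A x)) (𝓝[>] 0) (𝓝 0) := by
    simpa using hA.log one_ne_zero
  exact h.div_atBot Real.tendsto_log_nhdsGT_zero

lemma tendsto_dimension_bound_zero (ν : ℝ) (hν : 0 < ν) :
    Tendsto (fun x : ℝ =>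
        Real.log (1 + (1 / x) / (1 + x ^ ν)) / Real.log (1 + (1 + 1 / x) / x ^ ν))
      (𝓝[>] (0 : ℝ)) (𝓝 (1 / (1 + ν))) := by
  have hx : Tendsto (fun x : ℝ => x) (𝓝[>] 0) (𝓝 0) := tendsto_nhdsWithin_of_tendsto_nhds tendsto_id
  have hp : Tendsto (fun x : ℝ => x ^ ν) (𝓝[>] 0) (𝓝 0) := by
    simpa [Real.zero_rpow hν.ne'] using hx.rpow_const (Or.inr hν.le)
  have hA : Tendsto (fun x : ℝ => x + 1 / (1 + x ^ ν)) (𝓝[>] 0) (𝓝 1) := by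
    simpa using hx.add ((tendsto_const_nhds (x := (1 : ℝ))).div
      ((tendsto_const_nhds (x := (1 : ℝ))).add hp) (by norm_num))
  have hB : Tendsto (fun x : ℝ => x * x ^ ν + x + 1) (𝓝[>] 0) (𝓝 1) := by
    simpa using ((hx.mul hp).add hx).add_const 1
  have key := ((tendsto_log_div_log_zero hA).const_add (-1)).div
    ((tendsto_log_div_log_zero hB).const_add (-(1 + ν))) (by linarith)
  have hlim : (-1 + 0 : ℝ) / (-(1 + ν) + 0) = 1 / (1 + ν) := by
    rw [add_zero, add_zero, neg_div_neg_eq]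
  rw [hlim] at key
  refine key.congr' ?_
  filter_upwards [Ioo_mem_nhdsGT (zero_lt_one' ℝ)] with x ⟨h0, h1⟩
  have hq : 0 < x ^ ν := Real.rpow_pos_of_pos h0 ν
  have hlog : Real.log x ≠ 0 := (Real.log_neg h0 h1).ne
  have e1 : 1 + (1 / x) / (1 + x ^ ν) = x⁻¹ * (x + 1 / (1 + x ^ ν)) := by
    field_simp
  have e2 : 1 + (1 + 1 / x) / x ^ ν = (x * x ^ ν)⁻¹ * (x * x ^ ν + x + 1) := by
    field_simp
    ring
  have l1 : Real.log (1 + (1 / x) / (1 + x ^ ν))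
      = Real.log x * (-1 + Real.log (x + 1 / (1 + x ^ ν)) / Real.log x) := by
    rw [e1, Real.log_mul (by positivity) (by positivity), Real.log_inv]
    field_simp
  have l2 : Real.log (1 + (1 + 1 / x) / x ^ ν)
      = Real.log x * (-(1 + ν) + Real.log (x * x ^ ν + x + 1) / Real.log x) := by
    rw [e2, Real.log_mul (by positivity) (by positivity), Real.log_inv,
      Real.log_mul h0.ne' hq.ne', Real.log_rpow h0]
    field_simp
  rw [l1, l2, mul_div_mul_left _ _ hlog]
  rfl

/-- For every `ν > 0`, as `λ → 1⁺`,
`log(1 + (1/(λ-1)) / (1 + (λ-1)^ν)) / log(1 + (1 + 1/(λ-1)) / (λ-1)^ν)` tends to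
`1/(1+ν)` (real powers, natural logarithm, limit along `𝓝[>] 1`). -/
theorem limit_of_dimension_bound (ν : ℝ) (hν : 0 < ν) :
    Tendsto (fun l : ℝ =>
        Real.log (1 + (1 / (l - 1)) / (1 + (l - 1) ^ ν)) /
          Real.log (1 + (1 + 1 / (l - 1)) / (l - 1) ^ ν))
      (𝓝[>] (1 : ℝ)) (𝓝 (1 / (1 + ν))) := by
  have hs : Tendsto (fun l : ℝ => l - 1) (𝓝[>] 1) (𝓝[>] 0) := by
    refine tendsto_nhdsWithin_iff.2 ⟨tendsto_nhdsWithin_of_tendsto_nhds ?_, ?_⟩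
    · simpa using (tendsto_id (α := ℝ) (x := 𝓝 1)).sub_const 1
    · filter_upwards [self_mem_nhdsWithin] with l hl
      exact sub_pos.2 (Set.mem_Ioi.1 hl)
  exact (tendsto_dimension_bound_zero ν hν).comp hs
end

section
/- Let A be an invertible continuous linear map of the Euclidean plane ℝ² and let u₁, u₂ be nonzero vectors in ℝ². Then sin ∠(A u₁, A u₂) ≤ ‖A‖ · ‖A⁻¹‖ · sin ∠(u₁, u₂). -/
/-!
For `x ≠ 0`, the number `sin ∠(x, y) * ‖y‖` is the distance from `y` to the line spanned by `x`,
that is, the minimum over `t` of `‖y - t • x‖` (`norm_sub_smul_sq_eq`). A linear map `A` multiplies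
this distance by at most `‖A‖`, since it sends `u₂ - t • u₁` to `A u₂ - t • A u₁`; dividing by
`‖A u₂‖` and using `‖u₂‖ ≤ ‖A⁻¹‖ * ‖A u₂‖` gives the bound.
-/

open InnerProductGeometry

/-- Pythagoras for `y - t • x`: the first term on the right is the squared distance from `y` to the
line `ℝ x`, the second the squared offset of `t • x` from the foot of the perpendicular. -/
theorem norm_sub_smul_sq_eq {V : Type*} [NormedAddCommGroup V] [InnerProductSpace ℝ V]
    (x y : V) (t : ℝ) :
    ‖y - t • x‖ ^ 2 = (Real.sin (angle x y) * ‖y‖) ^ 2 +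
      (t * ‖x‖ - Real.cos (angle x y) * ‖y‖) ^ 2 := by
  have hc := cos_angle_mul_norm_mul_norm x y
  have ht : ‖t • x‖ ^ 2 = t ^ 2 * ‖x‖ ^ 2 := by
    rw [norm_smul, mul_pow, Real.norm_eq_abs, sq_abs]
  rw [norm_sub_sq_real, real_inner_smul_right, real_inner_comm, ← hc, ht]
  linear_combination (-‖y‖ ^ 2) * Real.sin_sq_add_cos_sq (angle x y)

theorem sin_angle_mul_norm_le {V : Type*} [NormedAddCommGroup V] [InnerProductSpace ℝ V]
    (x y : V) (t : ℝ) : Real.sin (angle x y) * ‖y‖ ≤ ‖y - t • x‖ := by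
  refine (abs_le_of_sq_le_sq' ?_ (norm_nonneg _)).2
  rw [norm_sub_smul_sq_eq x y t]
  exact le_add_of_nonneg_right (sq_nonneg _)

theorem exists_norm_sub_smul_eq {V : Type*} [NormedAddCommGroup V] [InnerProductSpace ℝ V]
    {x : V} (hx : x ≠ 0) (y : V) : ∃ t : ℝ, ‖y - t • x‖ = Real.sin (angle x y) * ‖y‖ := by
  refine ⟨Real.cos (angle x y) * ‖y‖ / ‖x‖, ?_⟩
  rw [← sq_eq_sq₀ (norm_nonneg _) (mul_nonneg (sin_angle_nonneg x y) (norm_nonneg y)),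
    norm_sub_smul_sq_eq, div_mul_cancel₀ _ (norm_ne_zero_iff.mpr hx)]
  ring

/-- Let `A` be an invertible continuous linear map of the Euclidean plane `ℝ²` and
`u₁, u₂` nonzero vectors. Then `sin ∠(A u₁, A u₂) ≤ ‖A‖ ⬝ ‖A⁻¹‖ ⬝ sin ∠(u₁, u₂)`,
where `∠` is the undirected angle between nonzero vectors and `‖·‖` the operator norm. -/
theorem sin_angle_image_le (A : EuclideanSpace ℝ (Fin 2) ≃L[ℝ] EuclideanSpace ℝ (Fin 2))
    (u₁ u₂ : EuclideanSpace ℝ (Fin 2)) (h₁ : u₁ ≠ 0) (h₂ : u₂ ≠ 0) :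
    Real.sin (angle (A u₁) (A u₂)) ≤
      ‖(A : EuclideanSpace ℝ (Fin 2) →L[ℝ] EuclideanSpace ℝ (Fin 2))‖ *
        ‖(A.symm : EuclideanSpace ℝ (Fin 2) →L[ℝ] EuclideanSpace ℝ (Fin 2))‖ *
          Real.sin (angle u₁ u₂) := by
  obtain ⟨t, ht⟩ := exists_norm_sub_smul_eq h₁ u₂
  have hpos : 0 < ‖A u₂‖ := norm_pos_iff.mpr (by simpa using h₂)
  have hsymm : ‖u₂‖ ≤ ‖(A.symm : EuclideanSpace ℝ (Fin 2) →L[ℝ] EuclideanSpace ℝ (Fin 2))‖ *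
      ‖A u₂‖ := by
    simpa using (A.symm : EuclideanSpace ℝ (Fin 2) →L[ℝ] EuclideanSpace ℝ (Fin 2)).le_opNorm (A u₂)
  have himage : ‖A u₂ - t • A u₁‖ ≤
      ‖(A : EuclideanSpace ℝ (Fin 2) →L[ℝ] EuclideanSpace ℝ (Fin 2))‖ * ‖u₂ - t • u₁‖ := by
    simpa using
      (A : EuclideanSpace ℝ (Fin 2) →L[ℝ] EuclideanSpace ℝ (Fin 2)).le_opNorm (u₂ - t • u₁)
  refine le_of_mul_le_mul_right ?_ hpos
  calc Real.sin (angle (A u₁) (A u₂)) * ‖A u₂‖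
      ≤ ‖A u₂ - t • A u₁‖ := sin_angle_mul_norm_le _ _ t
    _ ≤ ‖(A : EuclideanSpace ℝ (Fin 2) →L[ℝ] EuclideanSpace ℝ (Fin 2))‖ *
          (Real.sin (angle u₁ u₂) * ‖u₂‖) := ht ▸ himage
    _ ≤ ‖(A : EuclideanSpace ℝ (Fin 2) →L[ℝ] EuclideanSpace ℝ (Fin 2))‖ *
          (Real.sin (angle u₁ u₂) *
            (‖(A.symm : EuclideanSpace ℝ (Fin 2) →L[ℝ] EuclideanSpace ℝ (Fin 2))‖ * ‖A u₂‖)) := by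
        have := sin_angle_nonneg u₁ u₂
        gcongr
    _ = _ := by ring
end

section
/- Let A be an invertible continuous linear map of the Euclidean plane ℝ², let B be any continuous linear map of ℝ², and let u ∈ ℝ² with u ≠ 0 and B u ≠ 0. Then sin ∠(A u, B u) ≤ ‖A⁻¹‖ · ‖A − B‖. -/
/-!
The quantity `‖A u‖ sin ∠(A u, B u)` is the distance from `A u` to the line spanned by `B u`, so it
is at most `‖A u - B u‖ ≤ ‖A - B‖ ‖u‖` (`norm_mul_sin_angle_le_norm_sub`). Since
`‖u‖ = ‖A⁻¹ (A u)‖ ≤ ‖A⁻¹‖ ‖A u‖`, dividing by `‖A u‖ > 0` gives the bound.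
-/

open InnerProductGeometry

/-- The distance `‖x‖ sin ∠(x, y)` from `x` to the line `ℝ y` is at most the distance from `x`
to `y`. By the law of cosines,
`‖x - y‖² = (‖y‖ - ‖x‖ cos ∠(x, y))² + (‖x‖ sin ∠(x, y))²`. -/
lemma norm_mul_sin_angle_le_norm_sub {V : Type*} [NormedAddCommGroup V] [InnerProductSpace ℝ V]
    (x y : V) : ‖x‖ * Real.sin (angle x y) ≤ ‖x - y‖ := by
  refine (le_abs_self _).trans (abs_le_of_sq_le_sq ?_ (norm_nonneg _))
  rw [norm_sub_sq_real, ← cos_angle_mul_norm_mul_norm]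
  nlinarith [sq_nonneg (‖y‖ - ‖x‖ * Real.cos (angle x y)),
    congrArg (fun t => ‖x‖ ^ 2 * t) (Real.sin_sq_add_cos_sq (angle x y))]

/-- Let `A` be an invertible continuous linear map of the Euclidean plane `ℝ²`, let `B`
be any continuous linear map of `ℝ²`, and let `u ≠ 0` with `B u ≠ 0`. Then
`sin ∠(A u, B u) ≤ ‖A⁻¹‖ ⬝ ‖A - B‖`, where `∠` is the undirected angle between nonzero
vectors and `‖·‖` the operator norm. -/
theorem sin_angle_perturbation (A : EuclideanSpace ℝ (Fin 2) ≃L[ℝ] EuclideanSpace ℝ (Fin 2))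
    (B : EuclideanSpace ℝ (Fin 2) →L[ℝ] EuclideanSpace ℝ (Fin 2))
    (u : EuclideanSpace ℝ (Fin 2)) (hu : u ≠ 0) (hBu : B u ≠ 0) :
    Real.sin (angle (A u) (B u)) ≤
      ‖(A.symm : EuclideanSpace ℝ (Fin 2) →L[ℝ] EuclideanSpace ℝ (Fin 2))‖ *
        ‖(A : EuclideanSpace ℝ (Fin 2) →L[ℝ] EuclideanSpace ℝ (Fin 2)) - B‖ := by
  have hAu : 0 < ‖A u‖ := norm_pos_iff.2 (by simpa using hu)
  have h1 := norm_mul_sin_angle_le_norm_sub (A u) (B u)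
  have h2 : ‖A u - B u‖ ≤ _ :=
    ((A : EuclideanSpace ℝ (Fin 2) →L[ℝ] EuclideanSpace ℝ (Fin 2)) - B).le_opNorm u
  have h3 : ‖u‖ ≤
      ‖(A.symm : EuclideanSpace ℝ (Fin 2) →L[ℝ] EuclideanSpace ℝ (Fin 2))‖ * ‖A u‖ := by
    simpa using
      (A.symm : EuclideanSpace ℝ (Fin 2) →L[ℝ] EuclideanSpace ℝ (Fin 2)).le_opNorm (A u)
  refine le_of_mul_le_mul_left ?_ hAu
  refine (h1.trans h2).trans ((mul_le_mul_of_nonneg_left h3 (norm_nonneg _)).trans_eq ?_)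
  ring
end

section
/- For every real C₀ ≥ 1 and every ν ∈ (0,1) there exists h₀ ∈ (0,1) such that for all h ∈ (0, h₀): log(1 + (1/(4h)) / (1 + 500·C₀⁴·h^ν)) / log(1 + (1 + 4/h)·200·C₀⁴·h^{−ν}) > 1/(1 + 2ν). -/
open Real

/-!
Put `K = C₀⁴ ≥ 1` and `L = -log h`. Since `h ^ ν ≤ 1`, the numerator is at least `L - a` with
`a = log (4 (1 + 500 K))`. Since `1 ≤ K h⁻¹ h ^ (-ν)` and `1 + 4 / h ≤ 5 / h`, the denominator
is at most `(1 + ν) L + b` with `b = log (1001 K)`. Hence the claim follows from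
`(1 + 2ν)(L - a) > (1 + ν) L + b`, i.e. from `ν L > b + (1 + 2ν) a`, which is the condition
`h < exp (-(b + (1 + 2ν) a) / ν)`.
-/

/-- For every `C₀ ≥ 1` and `ν ∈ (0,1)` there exists `h₀ ∈ (0,1)` such that for all
`h ∈ (0, h₀)`:
`log(1 + (1/(4h)) / (1 + 500·C₀⁴·h^ν)) / log(1 + (1 + 4/h)·200·C₀⁴·h^(-ν)) > 1/(1+2ν)`
(real powers, natural logarithm). -/
theorem henon_dimension_final_estimate (C₀ : ℝ) (hC₀ : 1 ≤ C₀) (ν : ℝ)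
    (hν : ν ∈ Set.Ioo (0 : ℝ) 1) :
    ∃ h₀ ∈ Set.Ioo (0 : ℝ) 1, ∀ h ∈ Set.Ioo (0 : ℝ) h₀,
      Real.log (1 + (1 / (4 * h)) / (1 + 500 * C₀ ^ 4 * h ^ ν)) /
          Real.log (1 + (1 + 4 / h) * 200 * C₀ ^ 4 * h ^ (-ν)) >
        1 / (1 + 2 * ν) := by
  obtain ⟨hν0, hν1⟩ := hν
  have hK : 1 ≤ C₀ ^ 4 := one_le_pow₀ hC₀
  generalize C₀ ^ 4 = K at hK ⊢
  have hK0 : 0 < K := by linarith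
  have ha : 0 < log (4 * (1 + 500 * K)) := log_pos (by linarith)
  have hb : 0 < log (1001 * K) := log_pos (by linarith)
  set a := log (4 * (1 + 500 * K)) with ha_def
  set b := log (1001 * K) with hb_def
  have hM : 0 < (b + (1 + 2 * ν) * a) / ν := by positivity
  refine ⟨exp (-((b + (1 + 2 * ν) * a) / ν)), ⟨exp_pos _, exp_lt_one_iff.2 (by linarith)⟩, ?_⟩
  rintro h ⟨h0, hlt⟩
  have hh1 : h < 1 := hlt.trans (exp_lt_one_iff.2 (by linarith))
  have hL : (b + (1 + 2 * ν) * a) / ν < -log h := by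
    have := (log_lt_iff_lt_exp h0).2 hlt
    linarith
  rw [div_lt_iff₀ hν0] at hL
  have hp1 : h ^ ν ≤ 1 := rpow_le_one h0.le hh1.le hν0.le
  have hp0 : 0 < h ^ ν := rpow_pos_of_pos h0 _
  have hq1 : 1 ≤ h ^ (-ν) := one_le_rpow_of_pos_of_le_one_of_nonpos h0 hh1.le (by linarith)
  have hi1 : 1 ≤ h⁻¹ := (one_le_inv₀ h0).2 hh1.le
  have hnum : -log h - a ≤ log (1 + (1 / (4 * h)) / (1 + 500 * K * h ^ ν)) := by
    have e : -log h - a = log ((1 / (4 * h)) / (1 + 500 * K)) := by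
      rw [div_div, one_div, log_inv,
        show 4 * h * (1 + 500 * K) = h * (4 * (1 + 500 * K)) by ring,
        log_mul h0.ne' (by positivity), ← ha_def]
      ring
    rw [e]
    apply log_le_log (by positivity)
    have h1 : (1 / (4 * h)) / (1 + 500 * K) ≤ (1 / (4 * h)) / (1 + 500 * K * h ^ ν) := by
      have h2 : 500 * K * h ^ ν ≤ 500 * K := mul_le_of_le_one_right (by positivity) hp1
      exact div_le_div_of_nonneg_left (by positivity) (by positivity) (by linarith)
    linarith
  have hden : log (1 + (1 + 4 / h) * 200 * K * h ^ (-ν)) ≤ b + (1 + ν) * (-log h) := by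
    have e : b + (1 + ν) * (-log h) = log (1001 * K * (h⁻¹ * h ^ (-ν))) := by
      rw [log_mul (x := 1001 * K) (by positivity) (by positivity), ← hb_def,
        log_mul (by positivity) (by positivity), log_inv, log_rpow h0]
      ring
    rw [e]
    apply log_le_log (by positivity)
    have h1 : 1 ≤ K * (h⁻¹ * h ^ (-ν)) :=
      one_le_mul_of_one_le_of_one_le hK (one_le_mul_of_one_le_of_one_le hi1 hq1)
    have h2 : (1 + 4 / h) * 200 * K * h ^ (-ν) ≤ (5 * h⁻¹) * 200 * K * h ^ (-ν) := by
      gcongr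
      rw [div_eq_mul_inv]
      linarith
    linarith
  have hden0 : 0 < log (1 + (1 + 4 / h) * 200 * K * h ^ (-ν)) := by
    apply log_pos
    have : 0 < (1 + 4 / h) * 200 * K * h ^ (-ν) := by positivity
    linarith
  rw [gt_iff_lt, div_lt_div_iff₀ (by positivity) hden0]
  have := mul_le_mul_of_nonneg_right hnum (by positivity : 0 ≤ 1 + 2 * ν)
  linarith
end
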